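/- Let K be a field of characteristic 0 and let M be a Malcev dialgebra over K. Define the trilinear operation ⟨a,b,c⟩ = 2(ab)c + a(bc) + (ac)b on M. Then for all a,b,c,d,e ∈ M: ⟨a,b,⟨c,d,e⟩⟩ = ⟨⟨a,b,c⟩,d,e⟩ − ⟨⟨a,b,d⟩,c,e⟩ − ⟨⟨a,b,e⟩,c,d⟩ + ⟨⟨a,b,e⟩,d,c⟩. -/

import Mathlib

/-- The trilinear operation `⟨a,b,c⟩ = 2(ab)c + a(bc) + (ac)b` associated to a
bilinear product `f`. -/
def trip {K M : Type} [Field K] [AddCommGroup M] [Module K M]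
    (f : M →ₗ[K] M →ₗ[K] M) (a b c : M) : M :=
  (2 : K) • f (f a b) c + f a (f b c) + f (f a c) b

/-!
Let `J(x,y,z) = (xy)z - (xz)y - x(yz)`, and let `P : M → M` be linear with
`(P x)y - (P y)x = P(xy) + J(u,x,y)` for some fixed `u`. Moving `P` onto `c`, `d` or `e` in turn
by this rule, `⟨P c,d,e⟩ - ⟨P d,c,e⟩ - ⟨P e,c,d⟩ + ⟨P e,d,c⟩` becomes `P⟨c,d,e⟩` plus a combination
of values of `φ(u;y,z,w) = J(u,y,z)w + J(u,yz,w)`. The di-Malcev identity makes `φ`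
antisymmetric in its last three arguments, and this makes the combination vanish. A second use of
the di-Malcev identity shows that `P x = ⟨a,b,x⟩` obeys the rule with `u = ab`.
-/

section MalcevDialgebra

variable {R M : Type*} [CommRing R] [AddCommGroup M] [Module R M] {f : M →ₗ[R] M →ₗ[R] M}

/-- Right anticommutativity `a(bc) = -a(cb)` of a bilinear product, the first of the two axioms of a
Malcev dialgebra. -/
def RightAnticomm (f : M →ₗ[R] M →ₗ[R] M) : Prop :=
  ∀ a b c : M, f a (f b c) + f a (f c b) = 0

/-- The axioms of a right Malcev dialgebra, for a bilinear product over a commutative ring. -/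
structure IsMalcevDialgebra (f : M →ₗ[R] M →ₗ[R] M) : Prop where
  rightAnticomm : RightAnticomm f
  diMalcev : ∀ a b c d : M,
    f (f (f a b) c) d - f (f (f a d) b) c - f (f a (f c d)) b
      - f (f a c) (f b d) - f a (f (f b c) d) = 0

/-- The Jacobian `J(x,y,z) = (xy)z - (xz)y - x(yz)`, which measures how far right multiplications
are from representing a Lie algebra; it vanishes exactly for right Leibniz algebras. -/
def diJacobian (f : M →ₗ[R] M →ₗ[R] M) (x y z : M) : M :=
  f (f x y) z - f (f x z) y - f x (f y z)

/-- The expression `φ(x;y,z,w) = J(x,y,z)w + J(x,yz,w)`, through which the di-Malcev identity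
becomes an antisymmetry in `y`, `z`, `w`. -/
def malcevForm (f : M →ₗ[R] M →ₗ[R] M) (x y z w : M) : M :=
  f (diJacobian f x y z) w + diJacobian f x (f y z) w

/-- The triple product `⟨a,b,x⟩ = 2(ab)x + a(bx) + (ax)b` of `trip`, over a commutative ring and in
any universe, encoded as a linear map in `x`. -/
def malcevTriple (f : M →ₗ[R] M →ₗ[R] M) (a b : M) : M →ₗ[R] M :=
  (2 : R) • f (f a b) + f a ∘ₗ f b + f.flip b ∘ₗ f a

theorem malcevTriple_apply (f : M →ₗ[R] M →ₗ[R] M) (a b c : M) :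
    malcevTriple f a b c = (2 : R) • f (f a b) c + f a (f b c) + f (f a c) b :=
  rfl

namespace RightAnticomm

theorem mul_mul_swap (hf : RightAnticomm f) (x y z : M) : f x (f z y) = -f x (f y z) :=
  eq_neg_of_add_eq_zero_left (hf x z y)

theorem mul_mul_mul_swap (hf : RightAnticomm f) (x y z w : M) :
    f x (f (f z y) w) = -f x (f (f y z) w) := by
  rw [hf.mul_mul_swap x w (f z y), hf.mul_mul_swap w y z, map_neg, neg_neg,
    hf.mul_mul_swap x (f y z) w]

theorem diJacobian_swap (hf : RightAnticomm f) (x y z : M) :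
    diJacobian f x z y = -diJacobian f x y z := by
  simp only [diJacobian, hf.mul_mul_swap x y z]
  abel

theorem diJacobian_mul_swap (hf : RightAnticomm f) (x y z w : M) :
    diJacobian f x (f z y) w = -diJacobian f x (f y z) w := by
  simp only [diJacobian, hf.mul_mul_swap _ y z, hf.mul_mul_mul_swap x y z w, map_neg,
    LinearMap.neg_apply]
  abel

theorem malcevForm_swap_left (hf : RightAnticomm f) (x y z w : M) :
    malcevForm f x z y w = -malcevForm f x y z w := by
  simp only [malcevForm, hf.diJacobian_swap x y z, hf.diJacobian_mul_swap x y z w, map_neg,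
    LinearMap.neg_apply]
  abel

end RightAnticomm

namespace IsMalcevDialgebra

theorem malcevForm_swap_right (hf : IsMalcevDialgebra f) (x y z w : M) :
    malcevForm f x y w z = -malcevForm f x y z w := by
  have hyzw := hf.diMalcev x y z w
  have hywz := hf.diMalcev x y w z
  have hzw := congrArg (f · y) (hf.rightAnticomm x z w)
  simp only [malcevForm, diJacobian, map_add, map_sub, map_zero, LinearMap.add_apply,
    LinearMap.sub_apply, LinearMap.zero_apply] at hzw ⊢
  linear_combination (norm := module) hyzw + hywz + hzw

theorem malcevForm_cyclic (hf : IsMalcevDialgebra f) (x y z w : M) :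
    malcevForm f x z w y = malcevForm f x y z w := by
  rw [hf.malcevForm_swap_right, hf.rightAnticomm.malcevForm_swap_left, neg_neg]

theorem malcevTriple_mul_sub (hf : IsMalcevDialgebra f) (a b x y : M) :
    f (malcevTriple f a b x) y - f (malcevTriple f a b y) x =
      malcevTriple f a b (f x y) + diJacobian f (f a b) x y := by
  have hbxy := hf.diMalcev a b x y
  have hxby := hf.diMalcev a x b y
  have hyxb := hf.diMalcev a y x b
  rw [hf.rightAnticomm.mul_mul_mul_swap a b x y] at hxby
  rw [hf.rightAnticomm.mul_mul_swap (f a x) b y,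
    hf.rightAnticomm.mul_mul_mul_swap a x y b] at hyxb
  have hxy := hf.rightAnticomm.mul_mul_swap a b (f x y)
  have hbx := congrArg (f · y) (hf.rightAnticomm a b x)
  simp only [malcevTriple_apply, diJacobian, map_add, map_smul, map_zero,
    LinearMap.add_apply, LinearMap.smul_apply, LinearMap.zero_apply] at hbx ⊢
  linear_combination (norm := module) hbxy + hxby + hyxb - hxy + hbx

theorem map_malcevTriple (hf : IsMalcevDialgebra f) {P : M →ₗ[R] M} {u : M}
    (hP : ∀ x y, f (P x) y - f (P y) x = P (f x y) + diJacobian f u x y) (c d e : M) :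
    P (malcevTriple f c d e) =
      malcevTriple f (P c) d e - malcevTriple f (P d) c e
        - malcevTriple f (P e) c d + malcevTriple f (P e) d c := by
  have hcd := congrArg (f · e) (hP c d)
  have hce := congrArg (f · d) (hP c e)
  have hde := congrArg (f · c) (hP d e)
  have hform :
      (2 : R) • malcevForm f u c d e + malcevForm f u c e d - malcevForm f u d e c = 0 := by
    rw [hf.malcevForm_swap_right u c d e, hf.malcevForm_cyclic u c d e]
    module
  have hdc := hf.rightAnticomm (P e) c d
  have hJ := hf.rightAnticomm.diJacobian_swap u (f d e) c
  simp only [malcevForm, malcevTriple_apply, map_add, map_sub, map_smul, LinearMap.add_apply,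
    LinearMap.sub_apply] at hcd hce hde hform ⊢
  linear_combination (norm := module) -hform - (2 : R) • hcd - hce + hde
    - (2 : R) • hP (f c d) e - hP (f c e) d - hP c (f d e) - hJ - hdc

end IsMalcevDialgebra

theorem trilinear_second_LTS_identity_general (hf : IsMalcevDialgebra f) (a b c d e : M) :
    malcevTriple f a b (malcevTriple f c d e) =
      malcevTriple f (malcevTriple f a b c) d e - malcevTriple f (malcevTriple f a b d) c e
        - malcevTriple f (malcevTriple f a b e) c d
        + malcevTriple f (malcevTriple f a b e) d c :=
  hf.map_malcevTriple (hf.malcevTriple_mul_sub a b) c d e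

end MalcevDialgebra

/-- In any Malcev dialgebra `M` over a field `K` of
characteristic 0, the trilinear operation `⟨a,b,c⟩ = 2(ab)c + a(bc) + (ac)b`
satisfies the second Leibniz triple system identity:
`⟨a,b,⟨c,d,e⟩⟩ = ⟨⟨a,b,c⟩,d,e⟩ − ⟨⟨a,b,d⟩,c,e⟩ − ⟨⟨a,b,e⟩,c,d⟩ + ⟨⟨a,b,e⟩,d,c⟩`. -/
theorem trilinear_second_LTS_identity (K : Type) [Field K] [CharZero K]
    (M : Type) [AddCommGroup M] [Module K M]
    (f : M →ₗ[K] M →ₗ[K] M)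
    (hra : ∀ a b c : M, f a (f b c) + f a (f c b) = 0)
    (hdm : ∀ a b c d : M,
      f (f (f a b) c) d - f (f (f a d) b) c - f (f a (f c d)) b
        - f (f a c) (f b d) - f a (f (f b c) d) = 0) :
    ∀ a b c d e : M,
      trip f a b (trip f c d e)
        = trip f (trip f a b c) d e - trip f (trip f a b d) c e
          - trip f (trip f a b e) c d + trip f (trip f a b e) d c := by
  exact trilinear_second_LTS_identity_general ⟨hra, hdm⟩
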